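/- Let X be a Banach space, u : [t, t+k] → X any function, 0 < h = k/5 ≤ 1, and let w₀, …, w₅ ∈ X with Θ_i = w_i − u(t + ih) for i = 0, …, 5. Suppose there is C₀ > 0 such that ‖h^{−m} Σ_{i=0}^{m} (−1)^i binom(m,i) Θ_{j+m−i}‖ ≤ C₀ h^4 for all integers m, j ≥ 0 with 1 ≤ m ≤ 5 and j + m ≤ 5. Define a(v₀,…,v₅) = (125/384)(−3v₀ − v₁ + 18v₂ − 18v₃ + v₄ + 3v₅) and b(v₀,…,v₅) = (25/768)(145v₀ − 387v₁ + 402v₂ − 238v₃ + 93v₄ − 15v₅). Then ‖a(w₀,…,w₅) − a(u(t),…,u(t+5h))‖ ≤ ((125/24) + (125/128)) C₀ h^7 and ‖b(w₀,…,w₅) − b(u(t),…,u(t+5h))‖ ≤ ((25/8) + (25/48) + (75/128) + (125/256)) C₀ h^6. -/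

import Mathlib

open Finset

variable {X : Type*} [NormedAddCommGroup X] [NormedSpace ℝ X] [CompleteSpace X]

/-- The correction term `a` of the DC6RK2/4 scheme as a linear combination of six values. -/
noncomputable def dcA (w : ℕ → X) : X :=
  (125 / 384 : ℝ) • ((-3 : ℝ) • w 0 - w 1 + (18 : ℝ) • w 2 - (18 : ℝ) • w 3
    + w 4 + (3 : ℝ) • w 5)

/-- The correction term `b` of the DC6RK2/4 scheme as a linear combination of six values. -/
noncomputable def dcB (w : ℕ → X) : X :=
  (25 / 768 : ℝ) • ((145 : ℝ) • w 0 - (387 : ℝ) • w 1 + (402 : ℝ) • w 2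
    - (238 : ℝ) • w 3 + (93 : ℝ) • w 4 - (15 : ℝ) • w 5)

/-! On sequences, `b` annihilates the polynomials of degree at most 1, so it is a combination of the
forward differences of orders 2 to 5; `a` annihilates those of degree at most 2 and is antisymmetric
about the midpoint, so only centered differences of orders 3 and 5 occur in it. Hence a bound on the
divided differences `h⁻ᵐ Δᵐ Θ` gains a factor `h ^ 3` for `a` and `h ^ 2` for `b`, and as `h ≤ 1`
the higher-order differences only do better. -/

open scoped fwdDiff

theorem fwdDiff_iter_one_eq_sum_choose_smul (R : Type*) {E : Type*} [Ring R] [AddCommGroup E]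
    [Module R E] (v : ℕ → E) (m j : ℕ) :
    Δ_[1] ^[m] v j =
      ∑ i ∈ range (m + 1), ((-1 : R) ^ i * (m.choose i : R)) • v (j + m - i) := by
  rw [fwdDiff_iter_eq_sum_shift, ← sum_flip]
  refine sum_congr rfl fun i hi => ?_
  have him : i ≤ m := Nat.lt_succ_iff.mp (mem_range.mp hi)
  rw [Nat.sub_sub_self him, Nat.choose_symm him, smul_eq_mul, mul_one, ← Nat.add_sub_assoc him,
    ← Int.cast_smul_eq_zsmul R]
  push_cast
  rfl

theorem norm_le_mul_pow_add_of_norm_inv_pow_smul_le {E : Type*} [SeminormedAddCommGroup E]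
    [NormedSpace ℝ E] {h C : ℝ} (hh0 : 0 < h) (hh1 : h ≤ 1) {m n p : ℕ} (hnm : n ≤ m) {x : E}
    (hx : ‖(h ^ m)⁻¹ • x‖ ≤ C * h ^ p) : ‖x‖ ≤ C * h ^ (p + n) := by
  have hm : 0 < h ^ m := pow_pos hh0 m
  calc ‖x‖ = h ^ m * ‖(h ^ m)⁻¹ • x‖ := by
        rw [norm_smul, norm_inv, Real.norm_of_nonneg hm.le, mul_inv_cancel_left₀ hm.ne']
    _ ≤ h ^ n * (C * h ^ p) :=
        mul_le_mul (pow_le_pow_of_le_one hh0.le hh1 hnm) hx (norm_nonneg _) (pow_nonneg hh0.le n)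
    _ = C * h ^ (p + n) := by ring

section CorrectionTerms

variable {E : Type*} [NormedAddCommGroup E] [NormedSpace ℝ E]

theorem dcA_sub (w v : ℕ → E) : dcA (w - v) = dcA w - dcA v := by
  simp only [dcA, Pi.sub_apply]
  module

theorem dcB_sub (w v : ℕ → E) : dcB (w - v) = dcB w - dcB v := by
  simp only [dcB, Pi.sub_apply]
  module

theorem dcA_eq_fwdDiff (v : ℕ → E) :
    dcA v = (125 / 24 : ℝ) • Δ_[1] ^[3] v 1 + (125 / 128 : ℝ) • Δ_[1] ^[5] v 0 := by
  simp only [dcA, Function.iterate_succ, Function.iterate_zero, Function.comp_apply, id, fwdDiff,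
    Nat.reduceAdd]
  module

theorem dcB_eq_fwdDiff (v : ℕ → E) :
    dcB v = (25 / 8 : ℝ) • Δ_[1] ^[2] v 0 - (25 / 48 : ℝ) • Δ_[1] ^[3] v 0
      + (75 / 128 : ℝ) • Δ_[1] ^[4] v 0 - (125 / 256 : ℝ) • Δ_[1] ^[5] v 0 := by
  simp only [dcB, Function.iterate_succ, Function.iterate_zero, Function.comp_apply, id, fwdDiff,
    Nat.reduceAdd]
  module

theorem norm_dcA_le {v : ℕ → E} {M : ℝ} (h₃ : ‖Δ_[1] ^[3] v 1‖ ≤ M) (h₅ : ‖Δ_[1] ^[5] v 0‖ ≤ M) :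
    ‖dcA v‖ ≤ (125 / 24 + 125 / 128) * M := by
  calc ‖dcA v‖ ≤ 125 / 24 * ‖Δ_[1] ^[3] v 1‖ + 125 / 128 * ‖Δ_[1] ^[5] v 0‖ := by
        rw [dcA_eq_fwdDiff]
        refine norm_add_le_of_le ?_ ?_ <;> norm_num [norm_smul]
    _ ≤ (125 / 24 + 125 / 128) * M := by linarith

theorem norm_dcB_le {v : ℕ → E} {M : ℝ} (hM : ∀ m, 2 ≤ m → m ≤ 5 → ‖Δ_[1] ^[m] v 0‖ ≤ M) :
    ‖dcB v‖ ≤ (25 / 8 + 25 / 48 + 75 / 128 + 125 / 256) * M := by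
  calc ‖dcB v‖ ≤ 25 / 8 * ‖Δ_[1] ^[2] v 0‖ + 25 / 48 * ‖Δ_[1] ^[3] v 0‖
        + 75 / 128 * ‖Δ_[1] ^[4] v 0‖ + 125 / 256 * ‖Δ_[1] ^[5] v 0‖ := by
        rw [dcB_eq_fwdDiff]
        refine norm_sub_le_of_le (norm_add_le_of_le (norm_sub_le_of_le ?_ ?_) ?_) ?_ <;>
          norm_num [norm_smul]
    _ ≤ (25 / 8 + 25 / 48 + 75 / 128 + 125 / 256) * M := by
        linarith [hM 2 (by norm_num) (by norm_num), hM 3 (by norm_num) (by norm_num),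
          hM 4 (by norm_num) (by norm_num), hM 5 (by norm_num) (by norm_num)]

theorem dc_correction_terms_bound_general {h C : ℝ} {p : ℕ} (hh0 : 0 < h) (hh1 : h ≤ 1)
    (w v : ℕ → E) (hΘ : ∀ m j : ℕ, 2 ≤ m → j + m ≤ 5 →
      ‖(h ^ m)⁻¹ • Δ_[1] ^[m] (w - v) j‖ ≤ C * h ^ p) :
    ‖dcA w - dcA v‖ ≤ (125 / 24 + 125 / 128) * C * h ^ (p + 3) ∧
    ‖dcB w - dcB v‖ ≤ (25 / 8 + 25 / 48 + 75 / 128 + 125 / 256) * C * h ^ (p + 2) := by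
  have hΔ {n m j : ℕ} (hnm : n ≤ m) (hm : 2 ≤ m) (hjm : j + m ≤ 5) :
      ‖Δ_[1] ^[m] (w - v) j‖ ≤ C * h ^ (p + n) :=
    norm_le_mul_pow_add_of_norm_inv_pow_smul_le hh0 hh1 hnm (hΘ m j hm hjm)
  simp only [← dcA_sub, ← dcB_sub, mul_assoc]
  exact ⟨norm_dcA_le (hΔ le_rfl (by norm_num) (by norm_num))
      (hΔ (by norm_num) (by norm_num) (by norm_num)),
    norm_dcB_le fun m hm₂ hm₅ => hΔ hm₂ hm₂ (by lia)⟩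

end CorrectionTerms

/-- **stability of the correction terms under the DCC.**
Let `u : ℝ → X` be any function, `0 < h = k/5 ≤ 1`, and `w₀, …, w₅ ∈ X` with
`Θᵢ = wᵢ − u(t + i h)`. If `‖h^{−m} ∑_{i=0}^{m} (−1)^i (m choose i) Θ_{j+m−i}‖ ≤ C₀ h⁴`
for all `1 ≤ m ≤ 5`, `j + m ≤ 5`, then
`‖a(w) − a(u(t),…,u(t+5h))‖ ≤ (125/24 + 125/128) C₀ h⁷` and
`‖b(w) − b(u(t),…,u(t+5h))‖ ≤ (25/8 + 25/48 + 75/128 + 125/256) C₀ h⁶`. -/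
theorem dc_correction_terms_bound
    (u : ℝ → X) (t k h : ℝ) (hhk : h = k / 5) (hh0 : 0 < h) (hh1 : h ≤ 1)
    (w : ℕ → X) (C0 : ℝ) (hC0 : 0 < C0)
    (hΘ : ∀ m j : ℕ, 1 ≤ m → m ≤ 5 → j + m ≤ 5 →
      ‖(h ^ m)⁻¹ • ∑ i ∈ Finset.range (m + 1),
          ((-1 : ℝ) ^ i * (m.choose i : ℝ)) •
            (w (j + m - i) - u (t + ((j + m - i : ℕ) : ℝ) * h))‖ ≤ C0 * h ^ 4) :
    ‖dcA w - dcA (fun i => u (t + (i : ℝ) * h))‖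
        ≤ (125 / 24 + 125 / 128) * C0 * h ^ 7 ∧
    ‖dcB w - dcB (fun i => u (t + (i : ℝ) * h))‖
        ≤ (25 / 8 + 25 / 48 + 75 / 128 + 125 / 256) * C0 * h ^ 6 := by
  refine dc_correction_terms_bound_general hh0 hh1 w _ fun m j hm hjm => ?_
  simpa only [fwdDiff_iter_one_eq_sum_choose_smul ℝ, Pi.sub_apply] using
    hΘ m j (by lia) (by lia) hjm
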